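/- For every d ≥ 0: lim_{M→∞} [∫₀^M (√((p²+d)² + 16π(p²+d)) − (p²+d+8π)) p dp + 16π² ln(2M²)] = d²/4 + 8π² + 4πd − ¼ d√(d(d+16π)) − 2π√(d(d+16π)) + 16π² ln(d + √(d(d+16π)) + 8π). -/

import Mathlib

open MeasureTheory Real Filter

/-!
Put `a = 8π` and `y = p² + d + a`. Completing the square turns the integrand into
`(√(y² - a²) - y) p`, and `p dp = dy / 2`, so the integral is half the increment over
`[d + a, M² + d + a]` of an elementary primitive of `√(y² - a²) - y`. At infinity
`y (√(y² - a²) - y) → -a² / 2` and `y + √(y² - a²) ~ 2y`, so that primitive equals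
`-a² / 4 - (a² / 2) log (2y) + o(1)`, whose logarithm is what the counterterm cancels.
-/

/-- The primitive of `y ↦ √(y² - a²) - y` on the half-line `|a| < y`, with its logarithm in the
form `log (y + √(y² - a²))` rather than as an `arcosh`, so that it makes sense for every `a`. -/
noncomputable def sqrtDefectPrimitive (a y : ℝ) : ℝ :=
  (y * √(y ^ 2 - a ^ 2) - y ^ 2 - a ^ 2 * log (y + √(y ^ 2 - a ^ 2))) / 2

section Primitive

variable {a b c y : ℝ}

lemma sq_sub_sq_pos_of_abs_lt (h : |a| < y) : 0 < y ^ 2 - a ^ 2 :=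
  sub_pos.2 (sq_lt_sq.2 (h.trans_le (le_abs_self y)))

lemma hasDerivAt_sqrt_sq_sub_sq (h : |a| < y) :
    HasDerivAt (fun x : ℝ => √(x ^ 2 - a ^ 2)) (y / √(y ^ 2 - a ^ 2)) y := by
  convert ((hasDerivAt_pow 2 y).sub_const (a ^ 2)).sqrt (sq_sub_sq_pos_of_abs_lt h).ne' using 1
  push_cast
  field_simp

lemma hasDerivAt_log_add_sqrt_sq_sub_sq (h : |a| < y) :
    HasDerivAt (fun x : ℝ => log (x + √(x ^ 2 - a ^ 2))) (1 / √(y ^ 2 - a ^ 2)) y := by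
  have hy : 0 < y := (abs_nonneg a).trans_lt h
  have hs : 0 < √(y ^ 2 - a ^ 2) := sqrt_pos.2 (sq_sub_sq_pos_of_abs_lt h)
  convert ((hasDerivAt_id' y).fun_add (hasDerivAt_sqrt_sq_sub_sq h)).log (by positivity) using 1
  field_simp
  ring

lemma hasDerivAt_sqrtDefectPrimitive (h : |a| < y) :
    HasDerivAt (sqrtDefectPrimitive a) (√(y ^ 2 - a ^ 2) - y) y := by
  have hpos := sq_sub_sq_pos_of_abs_lt h
  have hsq : √(y ^ 2 - a ^ 2) ^ 2 = y ^ 2 - a ^ 2 := sq_sqrt hpos.le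
  have hmul := (hasDerivAt_id' y).fun_mul (hasDerivAt_sqrt_sq_sub_sq h)
  have hlog := (hasDerivAt_log_add_sqrt_sq_sub_sq h).const_mul (a ^ 2)
  refine (((hmul.fun_sub (hasDerivAt_pow 2 y)).fun_sub hlog).div_const 2).congr_deriv ?_
  push_cast
  field_simp
  linear_combination -hsq

lemma continuousOn_sqrtDefectPrimitive (a : ℝ) :
    ContinuousOn (sqrtDefectPrimitive a) (Set.Ioi 0) := by
  have hlog : ContinuousOn (fun y : ℝ => log (y + √(y ^ 2 - a ^ 2))) (Set.Ioi 0) :=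
    ContinuousOn.log (by fun_prop) fun y (hy : 0 < y) => by positivity
  unfold sqrtDefectPrimitive
  fun_prop

lemma integral_sqrt_sq_sub_sq_sub_self (hc : 0 < c) (hac : |a| ≤ c) (hcb : c ≤ b) :
    ∫ y in c..b, (√(y ^ 2 - a ^ 2) - y) = sqrtDefectPrimitive a b - sqrtDefectPrimitive a c :=
  intervalIntegral.integral_eq_sub_of_hasDerivAt_of_le hcb
    ((continuousOn_sqrtDefectPrimitive a).mono fun _ hy => hc.trans_le hy.1)
    (fun _ hy => hasDerivAt_sqrtDefectPrimitive (hac.trans_lt hy.1))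
    (Continuous.intervalIntegrable (by fun_prop) _ _)

lemma integral_sqrt_sq_add_sq_sub_sq_mul_self (hc : 0 < c) (hac : |a| ≤ c) (M : ℝ) :
    ∫ p in (0 : ℝ)..M, (√((p ^ 2 + c) ^ 2 - a ^ 2) - (p ^ 2 + c)) * p =
      (sqrtDefectPrimitive a (M ^ 2 + c) - sqrtDefectPrimitive a c) / 2 := by
  have hderiv (p : ℝ) : HasDerivAt (fun p : ℝ => p ^ 2 + c) (2 * p) p := by
    simpa using (hasDerivAt_pow 2 p).add_const c
  have hsubst := intervalIntegral.integral_comp_mul_deriv (a := 0) (b := M)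
    (g := fun y : ℝ => √(y ^ 2 - a ^ 2) - y) (fun p _ => hderiv p) (by fun_prop) (by fun_prop)
  calc ∫ p in (0 : ℝ)..M, (√((p ^ 2 + c) ^ 2 - a ^ 2) - (p ^ 2 + c)) * p
      = (∫ p in (0 : ℝ)..M, (√((p ^ 2 + c) ^ 2 - a ^ 2) - (p ^ 2 + c)) * (2 * p)) / 2 := by
        rw [← intervalIntegral.integral_div]
        congr! 2
        ring
    _ = (∫ y in c..M ^ 2 + c, (√(y ^ 2 - a ^ 2) - y)) / 2 := by
        simpa using hsubst
    _ = (sqrtDefectPrimitive a (M ^ 2 + c) - sqrtDefectPrimitive a c) / 2 := by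
        rw [integral_sqrt_sq_sub_sq_sub_self hc hac (le_add_of_nonneg_left (sq_nonneg M))]

end Primitive

section Asymptotics

variable (a : ℝ)

lemma tendsto_sqrt_sq_sub_sq_div_self :
    Tendsto (fun y : ℝ => √(y ^ 2 - a ^ 2) / y) atTop (nhds 1) := by
  have hlim : Tendsto (fun y : ℝ => √(1 - (a / y) ^ 2)) atTop (nhds 1) := by
    simpa using (((tendsto_id.const_div_atTop a).pow 2).const_sub 1).sqrt
  refine hlim.congr' ?_
  filter_upwards [eventually_gt_atTop 0] with y hy
  calc √(1 - (a / y) ^ 2) = √((y ^ 2 - a ^ 2) / y ^ 2) := by congr 1; field_simp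
    _ = √(y ^ 2 - a ^ 2) / y := by rw [sqrt_div' _ (sq_nonneg y), sqrt_sq hy.le]

lemma tendsto_self_mul_sqrt_sq_sub_sq_sub_self :
    Tendsto (fun y : ℝ => y * (√(y ^ 2 - a ^ 2) - y)) atTop (nhds (-(a ^ 2 / 2))) := by
  have hlim : Tendsto (fun y : ℝ => -a ^ 2 / (1 + √(y ^ 2 - a ^ 2) / y)) atTop
      (nhds (-a ^ 2 / (1 + 1))) :=
    tendsto_const_nhds.div ((tendsto_sqrt_sq_sub_sq_div_self a).const_add 1) (by norm_num)
  rw [one_add_one_eq_two, neg_div] at hlim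
  refine hlim.congr' ?_
  filter_upwards [eventually_gt_atTop 0, eventually_ge_atTop |a|] with y hy hay
  have hsq : √(y ^ 2 - a ^ 2) ^ 2 = y ^ 2 - a ^ 2 :=
    sq_sqrt (sub_nonneg.2 (sq_le_sq.2 (hay.trans (le_abs_self y))))
  have hne : y + √(y ^ 2 - a ^ 2) ≠ 0 := by positivity
  field_simp
  linear_combination -hsq

lemma tendsto_log_add_sqrt_sq_sub_sq_sub_log_two_mul :
    Tendsto (fun y : ℝ => log (y + √(y ^ 2 - a ^ 2)) - log (2 * y)) atTop (nhds 0) := by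
  have hratio : Tendsto (fun y : ℝ => (1 + √(y ^ 2 - a ^ 2) / y) / 2) atTop (nhds 1) := by
    convert ((tendsto_sqrt_sq_sub_sq_div_self a).const_add 1).div_const 2 using 2
    norm_num
  have hlog := hratio.log one_ne_zero
  rw [log_one] at hlog
  refine hlog.congr' ?_
  filter_upwards [eventually_gt_atTop 0] with y hy
  rw [← log_div (by positivity) (by positivity)]
  congr 1
  field_simp

lemma tendsto_sqrtDefectPrimitive_add_log :
    Tendsto (fun y : ℝ => sqrtDefectPrimitive a y + a ^ 2 / 2 * log (2 * y)) atTop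
      (nhds (-(a ^ 2 / 4))) := by
  convert ((tendsto_self_mul_sqrt_sq_sub_sq_sub_self a).div_const 2).sub
    ((tendsto_log_add_sqrt_sq_sub_sq_sub_log_two_mul a).const_mul (a ^ 2 / 2)) using 2 with y
  · rw [sqrtDefectPrimitive]
    ring
  · ring

lemma tendsto_sqrtDefectPrimitive_add_const_add_log (c : ℝ) :
    Tendsto (fun x : ℝ => sqrtDefectPrimitive a (x + c) + a ^ 2 / 2 * log (2 * x)) atTop
      (nhds (-(a ^ 2 / 4))) := by
  have hshift := (tendsto_sqrtDefectPrimitive_add_log a).comp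
    (tendsto_atTop_add_const_right atTop c tendsto_id)
  have hlog := (tendsto_log_comp_add_sub_log c).const_mul (a ^ 2 / 2)
  have hlim := hshift.sub hlog
  rw [mul_zero, sub_zero] at hlim
  refine hlim.congr' ?_
  filter_upwards [eventually_gt_atTop 0, eventually_gt_atTop (-c)] with x hx hxc
  have hxc' : x + c ≠ 0 := by linarith
  simp only [Function.comp_apply, id_eq, log_mul two_ne_zero hx.ne', log_mul two_ne_zero hxc']
  ring

end Asymptotics

theorem tendsto_energy_integral_with_log_counterterm_general {a d : ℝ} (ha : 0 < a) (hd : 0 ≤ d) :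
    Tendsto
      (fun M : ℝ =>
        (∫ p in Set.Ioc (0 : ℝ) M,
            (√((p ^ 2 + d) ^ 2 + 2 * a * (p ^ 2 + d)) - (p ^ 2 + d + a)) * p)
          + a ^ 2 / 4 * log (2 * M ^ 2))
      atTop
      (nhds (((d + a) ^ 2 - (d + a) * √(d * (d + 2 * a))
        + a ^ 2 * log (d + √(d * (d + 2 * a)) + a)) / 4 - a ^ 2 / 8)) := by
  have hac : |a| ≤ d + a := by rw [abs_of_pos ha]; linarith
  have hsquare (p : ℝ) : (p ^ 2 + d) ^ 2 + 2 * a * (p ^ 2 + d) = (p ^ 2 + (d + a)) ^ 2 - a ^ 2 := by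
    ring
  have hprim : sqrtDefectPrimitive a (d + a) = ((d + a) * √(d * (d + 2 * a)) - (d + a) ^ 2
      - a ^ 2 * log (d + √(d * (d + 2 * a)) + a)) / 2 := by
    rw [sqrtDefectPrimitive, add_right_comm d a,
      show (d + a) ^ 2 - a ^ 2 = d * (d + 2 * a) by ring]
  have hlim := (((tendsto_sqrtDefectPrimitive_add_const_add_log a (d + a)).comp
    (tendsto_pow_atTop two_ne_zero)).sub_const (sqrtDefectPrimitive a (d + a))).div_const 2
  convert hlim.congr' ?_ using 2
  · rw [hprim]
    ring
  · filter_upwards [eventually_ge_atTop 0] with M hM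
    simp only [hsquare, add_assoc _ d a, Function.comp_apply]
    rw [← intervalIntegral.integral_of_le hM,
      integral_sqrt_sq_add_sq_sub_sq_mul_self (by positivity) hac]
    ring

/-- for every `d ≥ 0`,
`lim_{M→∞} [∫₀^M (√((p²+d)² + 16π(p²+d)) − (p²+d+8π)) p dp + 16π² ln(2M²)]
  = d²/4 + 8π² + 4πd − ¼ d√(d(d+16π)) − 2π√(d(d+16π)) + 16π² ln(d + √(d(d+16π)) + 8π)`. -/
theorem tendsto_energy_integral_with_log_counterterm (d : ℝ) (hd : 0 ≤ d) :
    Tendsto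
      (fun M : ℝ =>
        (∫ p in Set.Ioc (0 : ℝ) M,
            (Real.sqrt ((p ^ 2 + d) ^ 2 + 16 * π * (p ^ 2 + d)) - (p ^ 2 + d + 8 * π)) * p)
          + 16 * π ^ 2 * Real.log (2 * M ^ 2))
      atTop
      (nhds (d ^ 2 / 4 + 8 * π ^ 2 + 4 * π * d
        - (1 / 4) * d * Real.sqrt (d * (d + 16 * π))
        - 2 * π * Real.sqrt (d * (d + 16 * π))
        + 16 * π ^ 2 * Real.log (d + Real.sqrt (d * (d + 16 * π)) + 8 * π))) := by
  have hlim := tendsto_energy_integral_with_log_counterterm_general (a := 8 * π) (by positivity) hd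
  rw [show 2 * (8 * π) = 16 * π by ring, show (8 * π) ^ 2 / 4 = 16 * π ^ 2 by ring] at hlim
  convert hlim using 2
  ring
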